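/- arXiv:2006.01116 — 2 statements merged into one kernel-verified Lean document; each statement's English description precedes it below -/
import Mathlib

section
/- Let D be a digraph with m arcs and minimum outdegree d ≥ 4, let X, Y be a partition of V(D) with e(X) = 0, set θ := min{|θ(X₁,X₂)| : X₁,X₂ a partition of X} and X' := {x ∈ X : s(x) ≥ θ}. Let ε > 0 and suppose every y ∈ Y satisfies d(y) ≤ ε²m/4. Then either there exists a bipartition V(D) = V₁ ∪ V₂ with min{e(V₁,V₂), e(V₂,V₁)} ≥ ((d−1)/(2(2d−1)) − ε)·m, or |X'| is an odd integer. -/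
open Finset

/-- Number of arcs of the digraph `A` directed from a vertex of `S` to a vertex of `T`. -/
def dArcs {V : Type} [Fintype V] [DecidableEq V] (A : V → V → Prop) [DecidableRel A]
    (S T : Finset V) : ℕ :=
  ((S ×ˢ T).filter fun p => A p.1 p.2).card

/-- Outdegree of `x`. -/
def outDeg {V : Type} [Fintype V] (A : V → V → Prop) [DecidableRel A] (x : V) : ℕ :=
  (Finset.univ.filter fun y => A x y).card

/-- Indegree of `x`. -/
def inDeg {V : Type} [Fintype V] (A : V → V → Prop) [DecidableRel A] (x : V) : ℕ :=
  (Finset.univ.filter fun y => A y x).card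

/-- Degree of `x`: outdegree plus indegree. -/
def deg {V : Type} [Fintype V] (A : V → V → Prop) [DecidableRel A] (x : V) : ℕ :=
  outDeg A x + inDeg A x

/-- `s(x) = max{d⁺(x) − d⁻(x), d⁻(x) − d⁺(x)}`. -/
def sVal {V : Type} [Fintype V] (A : V → V → Prop) [DecidableRel A] (x : V) : ℤ :=
  max ((outDeg A x : ℤ) - (inDeg A x : ℤ)) ((inDeg A x : ℤ) - (outDeg A x : ℤ))

/-- The gap `θ(X₁,X₂) = (e(X₁,Y)+e(Y,X₂)) − (e(X₂,Y)+e(Y,X₁))`. -/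
def gap {V : Type} [Fintype V] [DecidableEq V] (A : V → V → Prop) [DecidableRel A]
    (X₁ X₂ Y : Finset V) : ℤ :=
  ((dArcs A X₁ Y : ℤ) + (dArcs A Y X₂ : ℤ)) - ((dArcs A X₂ Y : ℤ) + (dArcs A Y X₁ : ℤ))

/-! Choose a sign for every vertex and cut between the positive and the negative ones. Four times
the number of arcs of this cut, in one direction or the other, is `m - Q ± L`, where `Q` sums the
products of the two end signs over the arcs and `L` is the signed sum of the net outdegrees. On
the independent set `X` take the signs of a partition attaining `θ`, up to one random flip common
to all of `X`, and flip each vertex of `Y` independently. Then `Q` has mean zero, and `|L|` has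
mean at most `√(θ² + ∑_{y ∈ Y} s(y)²)`, because the gap of a partition of `X` is the signed sum of
the net outdegrees on `X`. The degree bound on `Y` makes this at most `θ + 4εm`.

It remains to bound `θ` when `|X'|` is even. If all `s(x)` with `x ∈ X` were below `2θ`, the
elements of `X'` could be paired off so that the two values of a pair cancel to less than `θ`, and
all the resulting numbers could be signed one after the other with the total staying below `θ`,
against the minimality of `θ`. So `2θ ≤ s(x) ≤ |V| ≤ m / d` for some `x`. -/

section SignedSums

variable {ι G : Type*} [AddCommGroup G]

lemma sum_insert_update_smul [DecidableEq ι] {s : Finset ι} {i : ι} (hi : i ∉ s) (σ : ι → ℤˣ)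
    (c : ℤˣ) (f : ι → G) :
    ∑ j ∈ insert i s, Function.update σ i c j • f j = c • f i + ∑ j ∈ s, σ j • f j := by
  rw [sum_insert hi, Function.update_self]
  congr 1
  exact sum_congr rfl fun j hj => by rw [Function.update_of_ne (ne_of_mem_of_not_mem hj hi)]

variable [LinearOrder G] [IsOrderedAddMonoid G]

lemma exists_abs_smul_add_lt {a t θ : G} (ha : |a| < θ) (ht : |t| < θ) :
    ∃ c : ℤˣ, |c • a + t| < θ := by
  by_cases h : |a + t| < θ
  · exact ⟨1, by simpa using h⟩
  · exact ⟨-1, by rw [Units.neg_smul, one_smul]; grind⟩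

lemma exists_abs_add_smul_lt {a b θ : G} (ha : θ ≤ |a|) (ha' : |a| < 2 • θ) (hb : θ ≤ |b|)
    (hb' : |b| < 2 • θ) : ∃ c : ℤˣ, |a + c • b| < θ := by
  by_cases h : |a + b| < θ
  · exact ⟨1, by simpa using h⟩
  · exact ⟨-1, by rw [Units.neg_smul, one_smul]; grind⟩

theorem exists_abs_sum_smul_lt {θ : G} (hθ : 0 < θ) {f : ι → G} {s : Finset ι}
    (hf : ∀ i ∈ s, |f i| < 2 • θ) (heven : Even #{i ∈ s | θ ≤ |f i|}) :
    ∃ σ : ι → ℤˣ, |∑ i ∈ s, σ i • f i| < θ := by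
  classical
  induction s using Finset.strongInduction with
  | H s ih =>
  by_cases hsmall : ∃ i ∈ s, |f i| < θ
  · obtain ⟨i, hi, hfi⟩ := hsmall
    obtain ⟨σ, hσ⟩ := ih _ (erase_ssubset hi) (fun j hj => hf j (mem_of_mem_erase hj)) (by
      rwa [filter_erase, erase_eq_of_notMem (by simp [hfi])])
    obtain ⟨c, hc⟩ := exists_abs_smul_add_lt hfi hσ
    refine ⟨Function.update σ i c, ?_⟩
    rwa [← insert_erase hi, sum_insert_update_smul (notMem_erase i s)]
  push Not at hsmall
  rw [filter_true_of_mem hsmall] at heven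
  rcases s.eq_empty_or_nonempty with rfl | hs
  · exact ⟨1, by simpa using hθ⟩
  obtain ⟨i, hi, j, hj, hij⟩ : ∃ i ∈ s, ∃ j ∈ s, i ≠ j := by
    rw [← one_lt_card]
    grind
  have hji : j ∈ s.erase i := mem_erase.2 ⟨hij.symm, hj⟩
  set r := (s.erase i).erase j
  have hrs : r ⊂ s := (erase_ssubset hji).trans (erase_ssubset hi)
  obtain ⟨σ, hσ⟩ := ih r hrs (fun k hk => hf k (hrs.1 hk)) (by
    rw [filter_true_of_mem fun k hk => hsmall k (hrs.1 hk)]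
    grind)
  obtain ⟨c, hc⟩ :=
    exists_abs_add_smul_lt (hsmall i hi) (hf i hi) (hsmall j hj) (hf j hj)
  obtain ⟨e, he⟩ := exists_abs_smul_add_lt hc hσ
  refine ⟨Function.update (Function.update σ j (e * c)) i e, ?_⟩
  rwa [← insert_erase hi, sum_insert_update_smul (notMem_erase i s), ← insert_erase hji,
    sum_insert_update_smul (notMem_erase j _), mul_smul, ← add_assoc, ← smul_add]

end SignedSums

section RandomSigns

open scoped BigOperators

variable {ι M : Type*} [Fintype ι]

lemma expect_mul_smul_eq_zero [DecidableEq ι] [AddCommGroup M] [Module ℚ≥0 M] {i j : ι}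
    (hij : i ≠ j) (x : M) :
    𝔼 ρ : ι → ℤˣ, (ρ i * ρ j) • x = 0 := by
  rw [expect_univ, sum_involution (fun ρ _ => Pi.mulSingle i (-1) * ρ), smul_zero]
  · intro ρ _
    simp [hij.symm]
  · intro ρ _ _ h
    simpa using congrFun h i
  · simp
  · intro ρ _
    simp [← mul_assoc, ← Pi.mulSingle_mul]

lemma expect_sq_sum_smul [DecidableEq ι] (c : ι → ℝ) :
    𝔼 ρ : ι → ℤˣ, (∑ i, ρ i • c i) ^ 2 = ∑ i, c i ^ 2 := by
  calc 𝔼 ρ : ι → ℤˣ, (∑ i, ρ i • c i) ^ 2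
      = ∑ i, ∑ j, 𝔼 ρ : ι → ℤˣ, (ρ i * ρ j) • (c i * c j) := by
        simp_rw [sq, sum_mul_sum, smul_mul_smul_comm, expect_sum_comm]
    _ = ∑ i, c i ^ 2 := sum_congr rfl fun i _ => by
        rw [Fintype.sum_eq_single i fun j hj => expect_mul_smul_eq_zero hj.symm _]
        simp [Int.units_mul_self, sq]

lemma expect_abs_sum_smul_le [DecidableEq ι] (c : ι → ℝ) :
    𝔼 ρ : ι → ℤˣ, |∑ i, ρ i • c i| ≤ √(∑ i, c i ^ 2) := by
  refine Real.le_sqrt_of_sq_le ?_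
  rw [← expect_sq_sum_smul]
  simpa using expect_mul_sq_le_sq_mul_sq univ (fun ρ : ι → ℤˣ => |∑ i, ρ i • c i|) 1

theorem exists_sum_add_abs_sum_smul_le {κ : Type*} (E : Finset κ) {a b : κ → ι}
    (hab : ∀ e ∈ E, a e ≠ b e) (w : κ → ℝ) (c : ι → ℝ) :
    ∃ ρ : ι → ℤˣ, ∑ e ∈ E, (ρ (a e) * ρ (b e)) • w e + |∑ i, ρ i • c i| ≤ √(∑ i, c i ^ 2) := by
  classical
  have hquad : 𝔼 ρ : ι → ℤˣ, ∑ e ∈ E, (ρ (a e) * ρ (b e)) • w e = 0 := by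
    rw [expect_sum_comm]
    exact sum_eq_zero fun e he => expect_mul_smul_eq_zero (hab e he) _
  have hmean : 𝔼 ρ : ι → ℤˣ, (∑ e ∈ E, (ρ (a e) * ρ (b e)) • w e + |∑ i, ρ i • c i|) ≤
      √(∑ i, c i ^ 2) := by
    rw [expect_add_distrib, hquad, zero_add]
    exact expect_abs_sum_smul_le c
  obtain ⟨ρ, -, hρ⟩ := exists_le_of_expect_le univ_nonempty hmean
  exact ⟨ρ, hρ⟩

end RandomSigns

section Arcs

variable {V : Type} [Fintype V] (A : V → V → Prop) [DecidableRel A]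

/-- The arcs of the digraph `A`, as ordered pairs, for writing arc counts as sums over arcs. -/
def arcs : Finset (V × V) := {p | A p.1 p.2}

/-- The net outdegree `s⁺(x) = d⁺(x) − d⁻(x)`, the signed quantity whose absolute value is
`s(x)`. -/
def netOutDeg (x : V) : ℤ := outDeg A x - inDeg A x

variable {A}

@[simp]
lemma mem_arcs {p : V × V} : p ∈ arcs A ↔ A p.1 p.2 := by simp [arcs]

variable (A)

lemma sVal_eq_abs_netOutDeg (x : V) : sVal A x = |netOutDeg A x| := by
  rw [sVal, netOutDeg, abs_eq_max_neg, neg_sub]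

lemma sum_arcs_fst {M : Type*} [AddCommMonoid M] (g : V → M) :
    ∑ p ∈ arcs A, g p.1 = ∑ v, outDeg A v • g v := by
  simp_rw [arcs, sum_filter, Fintype.sum_prod_type, ← sum_filter, sum_const, outDeg]

lemma sum_arcs_snd {M : Type*} [AddCommMonoid M] (g : V → M) :
    ∑ p ∈ arcs A, g p.2 = ∑ v, inDeg A v • g v := by
  simp_rw [arcs, sum_filter, Fintype.sum_prod_type_right, ← sum_filter, sum_const, inDeg]

lemma sum_arcs_fst_sub_snd {M : Type*} [AddCommGroup M] (g : V → M) :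
    ∑ p ∈ arcs A, (g p.1 - g p.2) = ∑ v, netOutDeg A v • g v := by
  simp_rw [sum_sub_distrib, sum_arcs_fst, sum_arcs_snd, ← sum_sub_distrib, netOutDeg, sub_smul,
    natCast_zsmul]

lemma sum_outDeg : ∑ x, outDeg A x = #(arcs A) := by
  simpa using (sum_arcs_fst A fun _ => (1 : ℕ)).symm

lemma mul_card_le_card_arcs {d : ℕ} (hout : ∀ x, d ≤ outDeg A x) :
    d * Fintype.card V ≤ #(arcs A) := by
  rw [← sum_outDeg, mul_comm]
  exact card_nsmul_le_sum univ _ _ fun x _ => hout x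

lemma sum_inDeg : ∑ x, inDeg A x = #(arcs A) := by
  simpa using (sum_arcs_snd A fun _ => (1 : ℕ)).symm

lemma sum_deg : ∑ x, deg A x = 2 * #(arcs A) := by
  simp_rw [deg, sum_add_distrib, sum_outDeg, sum_inDeg, two_mul]

lemma abs_netOutDeg_le_deg (x : V) : |netOutDeg A x| ≤ deg A x := by
  rw [netOutDeg, deg]
  grind

lemma abs_netOutDeg_le_card (x : V) : |netOutDeg A x| ≤ Fintype.card V := by
  have hout : outDeg A x ≤ Fintype.card V := card_le_univ _
  have hin : inDeg A x ≤ Fintype.card V := card_le_univ _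
  rw [netOutDeg]
  grind

lemma sum_netOutDeg_sq_le {Y : Finset V} {Δ : ℝ} (hΔ₀ : 0 ≤ Δ)
    (hΔ : ∀ y ∈ Y, (deg A y : ℝ) ≤ Δ) :
    ∑ y ∈ Y, (netOutDeg A y : ℝ) ^ 2 ≤ Δ * (2 * #(arcs A)) := by
  calc ∑ y ∈ Y, (netOutDeg A y : ℝ) ^ 2 ≤ ∑ y ∈ Y, Δ * deg A y := by
        refine sum_le_sum fun y hy => ?_
        have habs : |(netOutDeg A y : ℝ)| ≤ deg A y := mod_cast abs_netOutDeg_le_deg A y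
        rw [← sq_abs, sq]
        exact mul_le_mul (habs.trans (hΔ y hy)) habs (abs_nonneg _) hΔ₀
    _ = Δ * ∑ y ∈ Y, (deg A y : ℝ) := (mul_sum ..).symm
    _ ≤ Δ * ∑ y, (deg A y : ℝ) := by
        gcongr
        exact subset_univ Y
    _ = Δ * (2 * #(arcs A)) := by
        rw [← Nat.cast_sum, sum_deg]
        push_cast
        rfl

variable [DecidableEq V]

lemma dArcs_eq_card (S T : Finset V) : dArcs A S T = #{p ∈ arcs A | p.1 ∈ S ∧ p.2 ∈ T} := by
  rw [dArcs]
  congr 1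
  ext p
  simp [and_comm]

lemma dArcs_univ : dArcs A univ univ = #(arcs A) := by
  simp [dArcs_eq_card]

variable {A}

lemma dArcs_eq_zero_iff {S T : Finset V} :
    dArcs A S T = 0 ↔ ∀ u ∈ S, ∀ v ∈ T, ¬ A u v := by
  simp only [dArcs, card_eq_zero, filter_eq_empty_iff, Prod.forall, mem_product, and_imp]
  grind

end Arcs

section Cuts

variable {V : Type} [Fintype V] [DecidableEq V] {A : V → V → Prop} [DecidableRel A]

variable (A) in
/-- The digraph `A` has a bipartition of its vertices with at least `c` arcs in each direction. -/
def HasBalancedCut (c : ℝ) : Prop :=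
  ∃ V₁ V₂ : Finset V, V₁ ∪ V₂ = univ ∧ Disjoint V₁ V₂ ∧
    c ≤ min (dArcs A V₁ V₂ : ℝ) (dArcs A V₂ V₁ : ℝ)

lemma HasBalancedCut.mono {b c : ℝ} (hbc : b ≤ c) : HasBalancedCut A c → HasBalancedCut A b :=
  fun ⟨V₁, V₂, hunion, hdisj, hcut⟩ => ⟨V₁, V₂, hunion, hdisj, hbc.trans hcut⟩

lemma four_mul_dArcs_sign {R : Type*} [CommRing R] (σ : V → ℤˣ) :
    4 * (dArcs A {v | σ v = 1} {v | σ v = -1} : R) =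
      #(arcs A) + ∑ v, σ v • (netOutDeg A v : R) - ∑ p ∈ arcs A, (σ p.1 * σ p.2) • (1 : R) := by
  have hnet : ∑ v, σ v • (netOutDeg A v : R) = ∑ p ∈ arcs A, (σ p.1 • (1 : R) - σ p.2 • 1) := by
    rw [sum_arcs_fst_sub_snd A fun v => σ v • (1 : R)]
    exact sum_congr rfl fun v _ => by rw [smul_comm, zsmul_one]
  rw [hnet, dArcs_eq_card, card_filter, card_eq_sum_ones]
  push_cast
  rw [mul_sum, ← sum_add_distrib, ← sum_sub_distrib]
  -- Each arc contributes `(1 + σ u) (1 - σ v)`, which is `4` if the cut contains it and `0` if not.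
  refine sum_congr rfl fun p _ => ?_
  rcases Int.units_eq_one_or (σ p.1) with hu | hu <;>
    rcases Int.units_eq_one_or (σ p.2) with hv | hv <;>
    norm_num [hu, hv]

theorem hasBalancedCut_of_sign {δ : ℝ} (σ : V → ℤˣ)
    (hσ : ∑ p ∈ arcs A, (σ p.1 * σ p.2) • (1 : ℝ) + |∑ v, σ v • (netOutDeg A v : ℝ)| ≤ δ) :
    HasBalancedCut A ((#(arcs A) - δ) / 4) := by
  have hcut := four_mul_dArcs_sign (A := A) (R := ℝ) σ
  have hcut' := four_mul_dArcs_sign (A := A) (R := ℝ) (-σ)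
  simp only [Pi.neg_apply, neg_eq_iff_eq_neg, neg_neg, Units.neg_smul, sum_neg_distrib,
    neg_mul_neg] at hcut'
  refine ⟨({v | σ v = 1} : Finset V), ({v | σ v = -1} : Finset V), ?_, ?_, le_min ?_ ?_⟩
  · ext v
    simpa using Int.units_eq_one_or (σ v)
  · exact disjoint_filter.2 fun v _ h₁ h₂ => by norm_num [h₁] at h₂
  · grind
  · grind

theorem hasBalancedCut_of_coloring {ι : Type*} [Fintype ι] [DecidableEq ι] (π : V → ι)
    (hπ : ∀ u v, A u v → π u ≠ π v) (σ : V → ℤˣ) :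
    HasBalancedCut A
      ((#(arcs A) - √(∑ i, (∑ v with π v = i, σ v • (netOutDeg A v : ℝ)) ^ 2)) / 4) := by
  obtain ⟨ρ, hρ⟩ := exists_sum_add_abs_sum_smul_le (arcs A)
    (fun p hp => hπ p.1 p.2 (mem_arcs.1 hp)) (fun p => (σ p.1 * σ p.2) • (1 : ℝ))
    (fun i => ∑ v with π v = i, σ v • (netOutDeg A v : ℝ))
  refine hasBalancedCut_of_sign (fun v => ρ (π v) * σ v) (le_of_eq_of_le ?_ hρ)
  congr 2
  · ext p
    rw [mul_mul_mul_comm, mul_smul]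
  · rw [← sum_fiberwise univ π]
    refine sum_congr rfl fun i _ => ?_
    rw [smul_sum]
    exact sum_congr rfl fun v hv => by rw [(mem_filter.1 hv).2, mul_smul]

theorem hasBalancedCut_of_dArcs_self_eq_zero (hirr : ∀ v, ¬ A v v) {X : Finset V}
    (heX : dArcs A X X = 0) (σ : V → ℤˣ) :
    HasBalancedCut A
      ((#(arcs A) - √((∑ x ∈ X, σ x • (netOutDeg A x : ℝ)) ^ 2 +
        ∑ y ∈ Xᶜ, (netOutDeg A y : ℝ) ^ 2)) / 4) := by
  -- Colour `X` with `none` and give every other vertex its own colour.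
  set π : V → Option V := fun v => if v ∈ X then none else some v with hπ
  have hindep : ∀ u v, A u v → π u ≠ π v := by
    rw [dArcs_eq_zero_iff] at heX
    grind
  have hnone : ({v | π v = none} : Finset V) = X := by
    ext v
    simp [hπ]
  have hsome (y : V) : (∑ v with π v = some y, σ v • (netOutDeg A v : ℝ)) ^ 2 =
      if y ∈ Xᶜ then (netOutDeg A y : ℝ) ^ 2 else 0 := by
    split_ifs with hy
    · rw [show ({v | π v = some y} : Finset V) = {y} by ext; grind [mem_compl], sum_singleton]
      rcases Int.units_eq_one_or (σ y) with h | h <;> simp [h]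
    · rw [show ({v | π v = some y} : Finset V) = ∅ by ext; grind [mem_compl]]
      simp
  have hcut := hasBalancedCut_of_coloring π hindep σ
  simp_rw [Fintype.sum_option, hnone, hsome, sum_ite_mem, univ_inter] at hcut
  exact hcut

lemma gap_eq_sum_sign {X X₁ : Finset V} (heX : dArcs A X X = 0) (hX₁ : X₁ ⊆ X) {σ : V → ℤˣ}
    (hσ : ∀ x ∈ X, σ x = 1 ↔ x ∈ X₁) :
    gap A X₁ (X \ X₁) Xᶜ = ∑ x ∈ X, σ x • netOutDeg A x := by
  rw [dArcs_eq_zero_iff] at heX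
  set g : V → ℤ := fun v => if v ∈ X then σ v else 0 with hg
  have hsum : ∑ x ∈ X, σ x • netOutDeg A x = ∑ p ∈ arcs A, (g p.1 - g p.2) := by
    rw [sum_arcs_fst_sub_snd]
    simp [hg, Units.smul_def, mul_comm]
  have hσX : ∀ x ∈ X, (σ x : ℤ) = if x ∈ X₁ then 1 else -1 := fun x hx => by
    rcases Int.units_eq_one_or (σ x) with h | h <;> simp [← hσ x hx, h]
  rw [hsum, gap]
  simp_rw [dArcs_eq_card, card_filter]
  push_cast
  rw [← sum_add_distrib, ← sum_add_distrib, ← sum_sub_distrib]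
  refine sum_congr rfl fun p hp => ?_
  have := heX p.1
  grind [mem_arcs, mem_compl]

theorem hasBalancedCut_of_gap (hirr : ∀ v, ¬ A v v) {X X₁ : Finset V}
    (heX : dArcs A X X = 0) (hX₁ : X₁ ⊆ X) :
    HasBalancedCut A
      ((#(arcs A) - √((gap A X₁ (X \ X₁) Xᶜ : ℝ) ^ 2 +
        ∑ y ∈ Xᶜ, (netOutDeg A y : ℝ) ^ 2)) / 4) := by
  set σ : V → ℤˣ := fun v => if v ∈ X₁ then 1 else -1 with hσ
  have hgap : (gap A X₁ (X \ X₁) Xᶜ : ℝ) = ∑ x ∈ X, σ x • (netOutDeg A x : ℝ) := by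
    rw [gap_eq_sum_sign (σ := σ) heX hX₁ (by simp [hσ])]
    simp [Units.smul_def]
  rw [hgap]
  exact hasBalancedCut_of_dArcs_self_eq_zero hirr heX σ

theorem hasBalancedCut_of_gap_of_deg_le (hirr : ∀ v, ¬ A v v) {X X₁ : Finset V}
    (heX : dArcs A X X = 0) (hX₁ : X₁ ⊆ X) {ε : ℝ} (hε : 0 ≤ ε)
    (hdeg : ∀ y ∈ Xᶜ, (deg A y : ℝ) ≤ 8 * ε ^ 2 * #(arcs A)) :
    HasBalancedCut A ((#(arcs A) - |(gap A X₁ (X \ X₁) Xᶜ : ℝ)|) / 4 - ε * #(arcs A)) := by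
  refine (hasBalancedCut_of_gap hirr heX hX₁).mono ?_
  have hY : ∑ y ∈ Xᶜ, (netOutDeg A y : ℝ) ^ 2 ≤ (4 * (ε * #(arcs A))) ^ 2 :=
    (sum_netOutDeg_sq_le A (by positivity) hdeg).trans_eq (by ring)
  have hsqrt : √((gap A X₁ (X \ X₁) Xᶜ : ℝ) ^ 2 + ∑ y ∈ Xᶜ, (netOutDeg A y : ℝ) ^ 2) ≤
      |(gap A X₁ (X \ X₁) Xᶜ : ℝ)| + 4 * (ε * #(arcs A)) := by
    refine Real.sqrt_le_iff.2 ⟨by positivity, ?_⟩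
    rw [add_sq, sq_abs]
    linarith [show 0 ≤ 2 * |(gap A X₁ (X \ X₁) Xᶜ : ℝ)| * (4 * (ε * #(arcs A))) by positivity]
  linarith

end Cuts


section MinGap

variable {V : Type} [Fintype V] [DecidableEq V] {A : V → V → Prop} [DecidableRel A]

lemma exists_two_mul_minGap_le_sVal {X : Finset V} (heX : dArcs A X X = 0) {θ : ℤ} (hpos : 0 < θ)
    (hθ : ∀ X₁ ⊆ X, θ ≤ |gap A X₁ (X \ X₁) Xᶜ|) (heven : Even #{x ∈ X | θ ≤ sVal A x}) :
    ∃ x ∈ X, 2 * θ ≤ sVal A x := by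
  by_contra! hlt
  simp_rw [sVal_eq_abs_netOutDeg] at hlt heven
  obtain ⟨σ, hσ⟩ := exists_abs_sum_smul_lt hpos (by simpa using hlt) heven
  rw [← gap_eq_sum_sign (X₁ := {x ∈ X | σ x = 1}) heX (filter_subset _ _) (by simp +contextual)]
    at hσ
  exact (hθ _ (filter_subset _ _)).not_gt hσ

lemma two_mul_minGap_le {X : Finset V} (heX : dArcs A X X = 0) {d : ℕ}
    (hout : ∀ x, d ≤ outDeg A x) {θ : ℤ} (hθ : ∀ X₁ ⊆ X, θ ≤ |gap A X₁ (X \ X₁) Xᶜ|)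
    (heven : Even #{x ∈ X | θ ≤ sVal A x}) : 2 * d * θ ≤ #(arcs A) := by
  rcases le_or_gt θ 0 with hneg | hpos
  · have : 2 * d * θ ≤ 0 := mul_nonpos_of_nonneg_of_nonpos (by positivity) hneg
    exact this.trans (by positivity)
  obtain ⟨x, -, hx⟩ := exists_two_mul_minGap_le_sVal heX hpos hθ heven
  calc 2 * d * θ = d * (2 * θ) := by ring
    _ ≤ d * Fintype.card V := by
      gcongr
      exact hx.trans (sVal_eq_abs_netOutDeg A x ▸ abs_netOutDeg_le_card A x)
    _ ≤ #(arcs A) := mod_cast mul_card_le_card_arcs A hout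

end MinGap

lemma sub_one_div_le_two_mul_sub_one_div {d : ℝ} (hd : 1 ≤ d) :
    (d - 1) / (2 * (2 * d - 1)) ≤ (2 * d - 1) / (8 * d) := by
  rw [div_le_div_iff₀ (by linarith) (by linarith)]
  linarith

theorem stmt6_general {V : Type} [Fintype V] [DecidableEq V] (A : V → V → Prop) [DecidableRel A]
    (hirr : ∀ v, ¬ A v v)
    (m : ℕ) (hm : m = dArcs A Finset.univ Finset.univ)
    (d : ℕ) (hd : 0 < d) (hout : ∀ x, d ≤ outDeg A x)
    (X Y : Finset V) (hXY : X ∪ Y = Finset.univ) (hdXY : Disjoint X Y)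
    (heX : dArcs A X X = 0)
    (θ : ℤ) (hθ : IsLeast {t : ℤ | ∃ X₁ ⊆ X, t = |gap A X₁ (X \ X₁) Y|} θ)
    (X' : Finset V) (hX' : X' = X.filter fun x => θ ≤ sVal A x)
    (ε : ℝ) (hε : 0 ≤ ε) (hdeg : ∀ y ∈ Y, (deg A y : ℝ) ≤ 8 * ε ^ 2 * m) :
    HasBalancedCut A (((2 * (d : ℝ) - 1) / (8 * d) - ε) * m) ∨ Odd #X' := by
  rw [← Nat.not_even_iff_odd, or_iff_not_imp_right, not_not]
  intro heven
  obtain rfl : Y = Xᶜ := (IsCompl.of_eq (disjoint_iff.1 hdXY) hXY).compl_eq.symm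
  rw [dArcs_univ] at hm
  subst hX' hm
  obtain ⟨X₁, hX₁, hθX₁⟩ := hθ.1
  refine (hasBalancedCut_of_gap_of_deg_le hirr heX hX₁ hε hdeg).mono ?_
  have hgap : 2 * (d : ℝ) * θ ≤ #(arcs A) := mod_cast
    two_mul_minGap_le heX hout (fun X₁ hX₁ => hθ.2 ⟨X₁, hX₁, rfl⟩) heven
  rw [← Int.cast_abs, ← hθX₁]
  have hθm : (θ : ℝ) ≤ #(arcs A) / (2 * d) := by
    rwa [le_div_iff₀' (by positivity)]
  calc ((2 * (d : ℝ) - 1) / (8 * d) - ε) * #(arcs A)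
      = (#(arcs A) - #(arcs A) / (2 * d)) / 4 - ε * #(arcs A) := by
        field_simp
        ring
    _ ≤ (#(arcs A) - θ) / 4 - ε * #(arcs A) := by gcongr

/-- Lemma 3.1(2). -/
theorem stmt6 {V : Type} [Fintype V] [DecidableEq V] (A : V → V → Prop) [DecidableRel A]
    (hirr : ∀ v, ¬ A v v)
    (m : ℕ) (hm : m = dArcs A Finset.univ Finset.univ)
    (d : ℕ) (hd : 4 ≤ d) (hout : ∀ x, d ≤ outDeg A x)
    (X Y : Finset V) (hXY : X ∪ Y = Finset.univ) (hdXY : Disjoint X Y)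
    (heX : dArcs A X X = 0)
    (θ : ℤ) (hθ : IsLeast {t : ℤ | ∃ X₁ ⊆ X, t = |gap A X₁ (X \ X₁) Y|} θ)
    (X' : Finset V) (hX' : X' = X.filter fun x => θ ≤ sVal A x)
    (ε : ℝ) (hε : 0 < ε) (hdeg : ∀ y ∈ Y, (deg A y : ℝ) ≤ ε ^ 2 * m / 4)
    :
    (∃ V₁ V₂ : Finset V, V₁ ∪ V₂ = Finset.univ ∧ Disjoint V₁ V₂ ∧
        (((d : ℝ) - 1) / (2 * (2 * (d : ℝ) - 1)) - ε) * m ≤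
          min (dArcs A V₁ V₂ : ℝ) (dArcs A V₂ V₁ : ℝ)) ∨
      Odd X'.card := by
  refine (stmt6_general A hirr m hm d (by lia) hout X Y hXY hdXY heX θ hθ X' hX' ε hε.le
    fun y hy => (hdeg y hy).trans (by nlinarith [show 0 ≤ ε ^ 2 * m by positivity])).imp_left
    (HasBalancedCut.mono ?_)
  gcongr (?_ - _) * _
  exact sub_one_div_le_two_mul_sub_one_div (Nat.one_le_cast.2 (by lia))
end

section
/- Let D be a digraph with m arcs and minimum outdegree d ≥ 4, let X, Y be a partition of V(D) with e(X) = 0, set θ := min{|θ(X₁,X₂)| : X₁,X₂ a partition of X}, X' := {x ∈ X : s(x) ≥ θ}, g := Σ_{x∈X∖X'} s(x), and b := (1/2)·Σ_{x∈X}(d(x) − s(x)). Let ε > 0 and suppose every y ∈ Y satisfies d(y) ≤ ε²m/4. Then either there exists a bipartition V(D) = V₁ ∪ V₂ with min{e(V₁,V₂), e(V₂,V₁)} ≥ ((d−1)/(2(2d−1)) − ε)·m, or |X'| = 2k+1 for some integer k ≥ 0 and, writing X' = {v₁,…,v_{2k+1}} with Δⱼ := s(vⱼ) and Δ₁ ≥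 Δ₂ ≥ … ≥ Δ_{2k+1}, one has d·(Σ_{j=1}^{k} Δⱼ + g) − (d−1)·Σ_{j=k+1}^{2k+1} Δⱼ + b + e(Y)/2 < 0. -/
open Finset

/-!
Fix a partition of `X` into `X₁` and `X₂` of minimal gap `θ` and split `Y` uniformly at random.
The two directed cuts between the sides have expectations `(m + θ) / 4` and `(m - θ) / 4` up to
order, and since the degrees in `Y` are small, the Efron–Stein inequality and a second moment bound
keep both within `ε m` of their expectations simultaneously. This gives the bipartition whenever
`(2 d - 1) θ ≤ m`.

Suppose `(2 d - 1) θ > m`. As `e(X) = 0`, the gaps are exactly the signed sums of the numbers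
`s(x)`, `x ∈ X`, so all of these have absolute value at least `θ`. The vertices outside `X'`, having
`s(x) < θ`, can be absorbed one at a time, so that all signed sums over `X'` have absolute value at
least `θ + g`. Moreover `d s(x) ≤ m` forces `s(x) < 2 θ`, so any two values of `s` on `X'` differ by
less than `θ`. If `|X'|` were even, pairing up its elements would produce a signed sum smaller than
`θ`. If `|X'| = 2 k + 1`, give the sign `+` to a window of `k + 1` consecutive elements and slide
it from the largest to the smallest: the signed sum starts out nonnegative and moves by less than
`2 θ` at each step, so it cannot cross the forbidden interval, and at the end of the slide
`Δₖ₊₁ + ⋯ + Δ₂ₖ₊₁ - (Δ₁ + ⋯ + Δₖ) ≥ θ + g`. Multiplying this by `2 d - 1` gives the inequality.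
-/

section SignedSum

variable {ι R : Type*} [DecidableEq ι] [CommRing R]

/-- The signed sum of the weights `s` over `Z` in which the elements of `P ⊆ Z` get the sign `+`
and those of `Z \ P` the sign `-`. -/
def signedSum (s : ι → R) (Z P : Finset ι) : R :=
  ∑ x ∈ P, s x - ∑ x ∈ Z \ P, s x

theorem signedSum_eq_two_mul_sub (s : ι → R) {Z P : Finset ι} (hP : P ⊆ Z) :
    signedSum s Z P = 2 * ∑ x ∈ P, s x - ∑ x ∈ Z, s x := by
  rw [signedSum, ← sum_sdiff hP]
  ring

theorem signedSum_union (s : ι → R) {Z W P Q : Finset ι} (hZW : Disjoint Z W) (hP : P ⊆ Z)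
    (hQ : Q ⊆ W) : signedSum s (Z ∪ W) (P ∪ Q) = signedSum s Z P + signedSum s W Q := by
  rw [signedSum_eq_two_mul_sub s (union_subset_union hP hQ), signedSum_eq_two_mul_sub s hP,
    signedSum_eq_two_mul_sub s hQ, sum_union hZW, sum_union (hZW.mono hP hQ)]
  ring

theorem signedSum_insert (s : ι → R) {a : ι} {Z P : Finset ι} (ha : a ∉ Z) (hP : P ⊆ Z) :
    signedSum s (insert a Z) P = signedSum s Z P - s a := by
  rw [signedSum_eq_two_mul_sub s (hP.trans (subset_insert a Z)), signedSum_eq_two_mul_sub s hP,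
    sum_insert ha]
  ring

theorem signedSum_insert_insert (s : ι → R) {a : ι} {Z P : Finset ι} (ha : a ∉ Z) (hP : P ⊆ Z) :
    signedSum s (insert a Z) (insert a P) = signedSum s Z P + s a := by
  rw [signedSum, insert_sdiff_insert, sdiff_insert_of_notMem ha, sum_insert (notMem_mono hP ha),
    signedSum]
  ring

theorem signedSum_image {κ : Type*} [DecidableEq κ] (s : ι → R) {v : κ → ι} {Z P : Finset κ}
    (hv : Set.InjOn v Z) (hP : P ⊆ Z) :
    signedSum s (Z.image v) (P.image v) = signedSum (fun j ↦ s (v j)) Z P := by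
  rw [signedSum_eq_two_mul_sub s (image_subset_image hP), signedSum_eq_two_mul_sub _ hP,
    sum_image hv, sum_image (hv.mono (coe_subset.mpr hP))]

theorem sum_eq_sum_sdiff_add_sum_Icc_add_sum_Icc {M : Type*} [AddCommMonoid M] (s : ι → M)
    {X Z : Finset ι} (hZ : Z ⊆ X) {k n : ℕ} (hkn : k ≤ n) {v : ℕ → ι} (hv : Z = (Icc 1 n).image v)
    (hinj : Set.InjOn v (Icc 1 n)) :
    ∑ x ∈ X, s x =
      ∑ x ∈ X \ Z, s x + (∑ j ∈ Icc 1 k, s (v j) + ∑ j ∈ Icc (k + 1) n, s (v j)) := by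
  have hsplit : ∑ j ∈ Icc 1 k, s (v j) + ∑ j ∈ Icc (k + 1) n, s (v j) =
      ∑ j ∈ Icc 1 n, s (v j) :=
    sum_Ico_consecutive (fun j ↦ s (v j)) (Nat.le_add_left 1 k) (Nat.succ_le_succ hkn)
  rw [hsplit, ← sum_image hinj, ← hv, sum_sdiff hZ]

theorem signedSum_Ico_sub_signedSum_Ico_succ (a : ℕ → R) {i j n : ℕ} (hi : 1 ≤ i) (hij : i < j)
    (hj : j ≤ n) :
    signedSum a (Icc 1 n) (Ico i j) - signedSum a (Icc 1 n) (Ico (i + 1) (j + 1)) =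
      2 * (a i - a j) := by
  have hsub : Ico i j ⊆ Icc 1 n := fun l ↦ by simp only [mem_Ico, mem_Icc]; omega
  have hsub' : Ico (i + 1) (j + 1) ⊆ Icc 1 n := fun l ↦ by simp only [mem_Ico, mem_Icc]; omega
  rw [signedSum_eq_two_mul_sub a hsub, signedSum_eq_two_mul_sub a hsub',
    sum_eq_sum_Ico_succ_bot hij, sum_Ico_succ_top (show i + 1 ≤ j from hij)]
  ring

variable [LinearOrder R] [IsStrictOrderedRing R]

theorem exists_signedSum_eq_signedSum_abs (f : ι → R) {Z P : Finset ι} (hP : P ⊆ Z) :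
    ∃ Q ⊆ Z, signedSum f Z Q = signedSum (fun x ↦ |f x|) Z P := by
  refine ⟨{x ∈ Z | x ∈ P ↔ 0 ≤ f x}, filter_subset _ _, ?_⟩
  rw [signedSum, signedSum, ← filter_not, ← filter_notMem_eq_sdiff,
    ← inter_eq_right.mpr hP, ← filter_mem_eq_inter]
  simp only [sum_filter, ← sum_sub_distrib]
  refine sum_congr rfl fun x hx ↦ ?_
  by_cases hxP : x ∈ P <;> rcases le_or_gt 0 (f x) with h | h <;>
    simp [hx, hxP, h, abs_of_nonneg, abs_of_neg, not_le.mpr]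

theorem add_sum_le_abs_of_forall_le_abs_add_signedSum {s : ι → R} {θ : R} {Z : Finset ι}
    (hs₀ : ∀ x ∈ Z, 0 ≤ s x) (hsθ : ∀ x ∈ Z, s x < θ) {t : R}
    (ht : ∀ P ⊆ Z, θ ≤ |t + signedSum s Z P|) : θ + ∑ x ∈ Z, s x ≤ |t| := by
  induction Z using Finset.induction_on generalizing t with
  | empty => simpa [signedSum] using ht ∅ subset_rfl
  | insert z Z hz ih =>
    rw [forall_mem_insert] at hs₀ hsθ
    have hsum : 0 ≤ ∑ x ∈ Z, s x := sum_nonneg hs₀.2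
    have hadd : θ + ∑ x ∈ Z, s x ≤ |t + s z| := ih hs₀.2 hsθ.2 fun P hP ↦ by
      have := ht (insert z P) (insert_subset_insert z hP)
      rwa [signedSum_insert_insert s hz hP, add_comm _ (s z), ← add_assoc] at this
    have hsub : θ + ∑ x ∈ Z, s x ≤ |t - s z| := ih hs₀.2 hsθ.2 fun P hP ↦ by
      have := ht P (hP.trans (subset_insert z Z))
      rwa [signedSum_insert s hz hP, add_sub, add_sub_right_comm] at this
    rw [sum_insert hz]
    -- `t + s z` and `t - s z` lie on the same side of `0`, being less than `2 * θ` apart.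
    rcases le_abs.mp hadd with h₁ | h₁ <;> rcases le_abs.mp hsub with h₂ | h₂ <;> rw [le_abs]
    · left; linarith
    · linarith
    · linarith
    · right; linarith

theorem add_sum_sdiff_filter_le_abs_signedSum {s : ι → R} {θ : R} {X P : Finset ι}
    (hs₀ : ∀ x ∈ X, 0 ≤ s x) (hX : ∀ P ⊆ X, θ ≤ |signedSum s X P|)
    (hP : P ⊆ {x ∈ X | θ ≤ s x}) :
    θ + ∑ x ∈ X \ {x ∈ X | θ ≤ s x}, s x ≤ |signedSum s {x ∈ X | θ ≤ s x} P| := by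
  have hsθ : ∀ x ∈ X \ {x ∈ X | θ ≤ s x}, s x < θ := fun x hx ↦ by
    rw [← filter_not, mem_filter] at hx
    exact not_le.mp hx.2
  refine add_sum_le_abs_of_forall_le_abs_add_signedSum (fun x hx ↦ hs₀ x (sdiff_subset hx)) hsθ
    fun Q hQ ↦ ?_
  rw [← signedSum_union s disjoint_sdiff hP hQ, union_sdiff_of_subset (filter_subset _ X)]
  exact hX _ (union_subset (hP.trans (filter_subset _ X)) (hQ.trans sdiff_subset))

theorem exists_abs_signedSum_lt_of_even {s : ι → R} {θ : R} (hθ : 0 < θ) {Z : Finset ι}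
    (hZ : Even #Z) (hs : ∀ x ∈ Z, ∀ y ∈ Z, s x - s y < θ) :
    ∃ P ⊆ Z, |signedSum s Z P| < θ := by
  obtain ⟨n, hn⟩ := hZ
  induction n generalizing Z with
  | zero =>
    obtain rfl : Z = ∅ := by simpa using hn
    exact ⟨∅, subset_rfl, by simpa [signedSum] using hθ⟩
  | succ n ih =>
    obtain ⟨a, Z₁, ha, rfl, hZ₁⟩ := card_eq_succ.mp (show #Z = (n + n + 1) + 1 by omega)
    obtain ⟨b, Z, hb, rfl, hZ⟩ := card_eq_succ.mp hZ₁
    obtain ⟨P, hP, hlt⟩ := ih (fun x hx y hy ↦ hs x (by simp [hx]) y (by simp [hy])) hZ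
    have hab := hs a (by simp) b (by simp)
    have hba := hs b (by simp) a (by simp)
    have hPb : P ⊆ insert b Z := hP.trans (subset_insert b Z)
    have hopposite : |signedSum s Z P + (s a - s b)| < θ ∨ |signedSum s Z P - (s a - s b)| < θ := by
      simp only [abs_lt] at hlt ⊢
      rcases le_total 0 (signedSum s Z P) with ht | ht <;>
        rcases le_total (s a) (s b) with h | h
      · left; constructor <;> linarith
      · right; constructor <;> linarith
      · right; constructor <;> linarith
      · left; constructor <;> linarith
    rcases hopposite with h | h
    · refine ⟨insert a P, insert_subset_insert a hPb, ?_⟩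
      rw [signedSum_insert_insert s ha hPb, signedSum_insert s hb hP]
      convert h using 2
      ring
    · refine ⟨insert b P, (insert_subset_insert b hP).trans (subset_insert a _), ?_⟩
      rw [signedSum_insert s ha (insert_subset_insert b hP), signedSum_insert_insert s hb hP]
      convert h using 2
      ring

theorem le_of_forall_le_abs {W : ℕ → R} {c : R} {n : ℕ} (h₀ : 0 ≤ W 0)
    (hstep : ∀ i < n, W i - W (i + 1) < 2 * c) (habs : ∀ i ≤ n, c ≤ |W i|) : c ≤ W n := by
  induction n with
  | zero => simpa only [abs_of_nonneg h₀] using habs 0 le_rfl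
  | succ n ih =>
    have hn : c ≤ W n := ih (fun i hi ↦ hstep i (by omega)) fun i hi ↦ habs i (by omega)
    rcases le_abs.mp (habs (n + 1) le_rfl) with h | h
    · exact h
    · linarith [hstep n (by omega)]

theorem signedSum_Ico_nonneg_of_antitoneOn {a : ℕ → R} {k : ℕ} (ha₀ : 0 ≤ a (k + 1))
    (hanti : AntitoneOn a (Set.Icc 1 (2 * k + 1))) :
    0 ≤ signedSum a (Icc 1 (2 * k + 1)) (Ico 1 (k + 2)) := by
  have hrest : Icc 1 (2 * k + 1) \ Ico 1 (k + 2) = Ico (k + 2) (2 * k + 2) := by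
    ext j; simp only [mem_sdiff, mem_Ico, mem_Icc]; omega
  have hlarge : ∑ j ∈ Ico (k + 2) (2 * k + 2), a j ≤ ∑ j ∈ Ico 1 (k + 1), a j := by
    rw [sum_Ico_eq_sum_range, sum_Ico_eq_sum_range,
      show 2 * k + 2 - (k + 2) = k + 1 - 1 by omega]
    refine sum_le_sum fun j hj ↦ ?_
    rw [mem_range] at hj
    exact hanti ⟨by omega, by omega⟩ ⟨by omega, by omega⟩ (by omega)
  rw [signedSum, hrest, sum_Ico_succ_top (by omega)]
  linarith

theorem le_sum_Icc_sub_sum_Icc {a : ℕ → R} {k : ℕ} {c : R} (ha₀ : 0 ≤ a (k + 1))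
    (hanti : AntitoneOn a (Set.Icc 1 (2 * k + 1))) (hspread : a 1 - a (2 * k + 1) < c)
    (hc : ∀ P ⊆ Icc 1 (2 * k + 1), c ≤ |signedSum a (Icc 1 (2 * k + 1)) P|) :
    c ≤ ∑ j ∈ Icc (k + 1) (2 * k + 1), a j - ∑ j ∈ Icc 1 k, a j := by
  -- Slide a window of `k + 1` consecutive indices from the largest weights to the smallest.
  let W : ℕ → R := fun i ↦ signedSum a (Icc 1 (2 * k + 1)) (Ico (i + 1) (i + k + 2))
  have hW₀ : 0 ≤ W 0 := by
    simpa only [W, zero_add] using signedSum_Ico_nonneg_of_antitoneOn ha₀ hanti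
  have hstep : ∀ i < k, W i - W (i + 1) < 2 * c := by
    intro i hi
    have hfirst : a (i + 1) ≤ a 1 := hanti ⟨by omega, by omega⟩ ⟨by omega, by omega⟩ (by omega)
    have hlast : a (2 * k + 1) ≤ a (i + k + 2) :=
      hanti ⟨by omega, by omega⟩ ⟨by omega, by omega⟩ (by omega)
    simp only [W]
    rw [show i + 1 + k + 2 = i + k + 2 + 1 by omega,
      signedSum_Ico_sub_signedSum_Ico_succ a (by omega) (by omega) (by omega)]
    linarith
  have hWk : W k = ∑ j ∈ Icc (k + 1) (2 * k + 1), a j - ∑ j ∈ Icc 1 k, a j := by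
    have hlast : Ico (k + 1) (k + k + 2) = Icc (k + 1) (2 * k + 1) := by
      ext j; simp only [mem_Ico, mem_Icc]; omega
    have hrest : Icc 1 (2 * k + 1) \ Icc (k + 1) (2 * k + 1) = Icc 1 k := by
      ext j; simp only [mem_sdiff, mem_Icc]; omega
    simp only [W, signedSum, hlast, hrest]
  rw [← hWk]
  refine le_of_forall_le_abs hW₀ hstep fun i hi ↦ hc _ fun j ↦ ?_
  simp only [mem_Ico, mem_Icc]
  omega

section Threshold

variable {s : ι → R} {θ : R} {X : Finset ι}

theorem odd_card_filter_of_forall_le_abs_signedSum (hθ : 0 < θ) (hs₀ : ∀ x ∈ X, 0 ≤ s x)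
    (hs : ∀ x ∈ X, s x < 2 * θ) (hX : ∀ P ⊆ X, θ ≤ |signedSum s X P|) :
    Odd #{x ∈ X | θ ≤ s x} := by
  by_contra hodd
  obtain ⟨P, hP, hlt⟩ := exists_abs_signedSum_lt_of_even (s := s) hθ
    (Nat.not_odd_iff_even.mp hodd) fun x hx y hy ↦ by
      linarith [hs x (mem_filter.mp hx).1, (mem_filter.mp hy).2]
  have hlarge := add_sum_sdiff_filter_le_abs_signedSum hs₀ hX hP
  have hsmall : 0 ≤ ∑ x ∈ X \ {x ∈ X | θ ≤ s x}, s x :=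
    sum_nonneg fun x hx ↦ hs₀ x (sdiff_subset hx)
  linarith

theorem add_sum_sdiff_filter_le_sum_Icc_sub_sum_Icc (hs₀ : ∀ x ∈ X, 0 ≤ s x)
    (hs : ∀ x ∈ X, s x < 2 * θ) (hX : ∀ P ⊆ X, θ ≤ |signedSum s X P|) {k : ℕ} {v : ℕ → ι}
    (hv : {x ∈ X | θ ≤ s x} = (Icc 1 (2 * k + 1)).image v)
    (hinj : Set.InjOn v (Icc 1 (2 * k + 1)))
    (hanti : AntitoneOn (fun j ↦ s (v j)) (Set.Icc 1 (2 * k + 1))) :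
    θ + ∑ x ∈ X \ {x ∈ X | θ ≤ s x}, s x ≤
      ∑ j ∈ Icc (k + 1) (2 * k + 1), s (v j) - ∑ j ∈ Icc 1 k, s (v j) := by
  have hmem {j : ℕ} (h₁ : 1 ≤ j) (h₂ : j ≤ 2 * k + 1) : v j ∈ X ∧ θ ≤ s (v j) := by
    have hvj := mem_image_of_mem v (mem_Icc.mpr ⟨h₁, h₂⟩)
    rw [← hv] at hvj
    exact mem_filter.mp hvj
  have hsmall : 0 ≤ ∑ x ∈ X \ {x ∈ X | θ ≤ s x}, s x :=
    sum_nonneg fun x hx ↦ hs₀ x (sdiff_subset hx)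
  refine le_sum_Icc_sub_sum_Icc (hs₀ _ (hmem (by omega) (by omega)).1) hanti ?_ fun P hP ↦ ?_
  · linarith [hs _ (hmem le_rfl (by omega)).1, (hmem (by omega) (le_refl (2 * k + 1))).2]
  · rw [← signedSum_image s hinj hP, ← hv]
    exact add_sum_sdiff_filter_le_abs_signedSum hs₀ hX (hv ▸ image_subset_image hP)

end Threshold

end SignedSum

section RandomSubset

open scoped BigOperators

variable {α K : Type*} [Field K] [CharZero K]

theorem expect_powerset_insert [DecidableEq α] {y : α} {Y : Finset α} (hy : y ∉ Y)
    (f : Finset α → K) :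
    𝔼 S ∈ (insert y Y).powerset, f S = 𝔼 S ∈ Y.powerset, (f S + f (insert y S)) / 2 := by
  simp only [expect_eq_sum_div_card, sum_powerset_insert hy, card_powerset,
    card_insert_of_notMem hy, ← sum_div, sum_add_distrib]
  push_cast
  field_simp
  ring

theorem expect_powerset_sum (Y : Finset α) (f : α → K) :
    𝔼 S ∈ Y.powerset, ∑ x ∈ S, f x = (∑ x ∈ Y, f x) / 2 := by
  classical
  induction Y using Finset.induction_on with
  | empty => simp
  | insert y Y hy ih =>
    have hpair : ∀ S ∈ Y.powerset,
        (∑ x ∈ S, f x + ∑ x ∈ insert y S, f x) / 2 = ∑ x ∈ S, f x + f y / 2 := by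
      intro S hS
      rw [sum_insert (notMem_mono (mem_powerset.mp hS) hy)]
      ring
    rw [expect_powerset_insert hy, expect_congr rfl hpair, expect_add_distrib, ih,
      expect_const (powerset_nonempty Y), sum_insert hy]
    ring

variable [DecidableEq α]

theorem expect_powerset_sum_sdiff (Y : Finset α) (f : α → K) :
    𝔼 S ∈ Y.powerset, ∑ x ∈ Y \ S, f x = (∑ x ∈ Y, f x) / 2 := by
  have hsdiff : ∀ S ∈ Y.powerset, ∑ x ∈ Y \ S, f x = ∑ x ∈ Y, f x - ∑ x ∈ S, f x :=
    fun S hS ↦ eq_sub_of_add_eq (sum_sdiff (mem_powerset.mp hS))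
  rw [expect_congr rfl hsdiff, expect_sub_distrib, expect_const (powerset_nonempty Y),
    expect_powerset_sum]
  ring

theorem expect_powerset_sum_sum_sdiff {Y : Finset α} {w : α → α → K}
    (hw : ∀ x ∈ Y, w x x = 0) :
    𝔼 S ∈ Y.powerset, ∑ x ∈ S, ∑ y ∈ Y \ S, w x y = (∑ x ∈ Y, ∑ y ∈ Y, w x y) / 4 := by
  induction Y using Finset.induction_on with
  | empty => simp
  | insert z Y hz ih =>
    rw [forall_mem_insert] at hw
    have hpair : ∀ S ∈ Y.powerset,
        (∑ x ∈ S, ∑ y ∈ insert z Y \ S, w x y +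
          ∑ x ∈ insert z S, ∑ y ∈ insert z Y \ insert z S, w x y) / 2 =
        ∑ x ∈ S, ∑ y ∈ Y \ S, w x y + (∑ x ∈ S, w x z) / 2 + (∑ y ∈ Y \ S, w z y) / 2 := by
      intro S hS
      have hzS : z ∉ S := notMem_mono (mem_powerset.mp hS) hz
      rw [insert_sdiff_insert, sdiff_insert_of_notMem hz, insert_sdiff_of_notMem _ hzS,
        sum_insert hzS]
      simp only [sum_insert (notMem_mono sdiff_subset hz), sum_add_distrib]
      ring
    rw [expect_powerset_insert hz, expect_congr rfl hpair, expect_add_distrib, expect_add_distrib,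
      ih hw.2, ← expect_div, ← expect_div, expect_powerset_sum, expect_powerset_sum_sdiff]
    simp only [sum_insert hz, sum_add_distrib, hw.1]
    ring

end RandomSubset

section EfronStein

open scoped BigOperators

variable {α K : Type*} [DecidableEq α] [Field K] [LinearOrder K] [IsStrictOrderedRing K]
  {Y : Finset α} {c : α → K}

-- The Efron–Stein inequality for a uniformly random subset of `Y`.
theorem expect_powerset_sq_sub_expect_le {f : Finset α → K}
    (hf : ∀ y ∈ Y, ∀ S ⊆ Y, y ∉ S → |f (insert y S) - f S| ≤ c y) :
    𝔼 S ∈ Y.powerset, (f S - 𝔼 T ∈ Y.powerset, f T) ^ 2 ≤ (∑ y ∈ Y, c y ^ 2) / 4 := by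
  induction Y using Finset.induction_on generalizing f with
  | empty => simp
  | insert y Y hy ih =>
    set μ := 𝔼 T ∈ (insert y Y).powerset, f T with hμ
    rw [expect_powerset_insert hy] at hμ
    have hYy : Y ⊆ insert y Y := subset_insert y Y
    have haverage : 𝔼 S ∈ Y.powerset, ((f S + f (insert y S)) / 2 - μ) ^ 2 ≤
        (∑ z ∈ Y, c z ^ 2) / 4 := by
      rw [hμ]
      refine ih fun z hz S hS hzS ↦ ?_
      have hzy : z ≠ y := ne_of_mem_of_not_mem hz hy
      have h₁ := hf z (hYy hz) S (hS.trans hYy) hzS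
      have h₂ := hf z (hYy hz) (insert y S) (insert_subset_insert y hS) (by simp [hzy, hzS])
      rw [insert_comm] at h₂
      rw [abs_le] at h₁ h₂ ⊢
      constructor <;> linarith
    have hpair : ∀ S ∈ Y.powerset, ((f S - μ) ^ 2 + (f (insert y S) - μ) ^ 2) / 2 ≤
        ((f S + f (insert y S)) / 2 - μ) ^ 2 + c y ^ 2 / 4 := by
      intro S hS
      rw [mem_powerset] at hS
      have hdiff := sq_le_sq.mpr
        ((hf y (mem_insert_self y Y) S (hS.trans hYy) (notMem_mono hS hy)).trans (le_abs_self _))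
      linarith
    rw [expect_powerset_insert hy, sum_insert hy]
    refine (expect_le_expect hpair).trans ?_
    rw [expect_add_distrib, expect_const (powerset_nonempty Y)]
    linarith

theorem exists_subset_abs_sub_expect_le {f₁ f₂ : Finset α → K} {δ : K} (hδ : 0 ≤ δ)
    (hc : ∑ y ∈ Y, c y ^ 2 ≤ 2 * δ ^ 2)
    (hf₁ : ∀ y ∈ Y, ∀ S ⊆ Y, y ∉ S → |f₁ (insert y S) - f₁ S| ≤ c y)
    (hf₂ : ∀ y ∈ Y, ∀ S ⊆ Y, y ∉ S → |f₂ (insert y S) - f₂ S| ≤ c y) :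
    ∃ S ⊆ Y, |f₁ S - 𝔼 T ∈ Y.powerset, f₁ T| ≤ δ ∧ |f₂ S - 𝔼 T ∈ Y.powerset, f₂ T| ≤ δ := by
  have hvariance : 𝔼 S ∈ Y.powerset, ((f₁ S - 𝔼 T ∈ Y.powerset, f₁ T) ^ 2 +
      (f₂ S - 𝔼 T ∈ Y.powerset, f₂ T) ^ 2) ≤ δ ^ 2 := by
    rw [expect_add_distrib]
    linarith [expect_powerset_sq_sub_expect_le hf₁, expect_powerset_sq_sub_expect_le hf₂]
  obtain ⟨S, hS, hle⟩ := exists_le_of_expect_le (powerset_nonempty Y) hvariance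
  refine ⟨S, mem_powerset.mp hS, abs_le_of_sq_le_sq ?_ hδ, abs_le_of_sq_le_sq ?_ hδ⟩
  · exact (le_add_of_nonneg_right (sq_nonneg _)).trans hle
  · exact (le_add_of_nonneg_left (sq_nonneg _)).trans hle

end EfronStein

section Digraph

variable {V : Type} [Fintype V] (A : V → V → Prop) [DecidableRel A]

theorem sVal_eq_abs (x : V) : sVal A x = |(outDeg A x : ℤ) - inDeg A x| := by
  rw [sVal, abs_eq_max_neg, neg_sub]

theorem sVal_nonneg (x : V) : 0 ≤ sVal A x :=
  sVal_eq_abs A x ▸ abs_nonneg _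

theorem deg_swap (x : V) : deg (fun x y ↦ A y x) x = deg A x :=
  add_comm _ _

variable [DecidableEq V]

theorem dArcs_eq_sum_sum (S T : Finset V) :
    dArcs A S T = ∑ x ∈ S, ∑ y ∈ T, if A x y then 1 else 0 := by
  rw [dArcs, card_filter, sum_product]

theorem dArcs_swap (S T : Finset V) : dArcs (fun x y ↦ A y x) S T = dArcs A T S := by
  rw [dArcs_eq_sum_sum, dArcs_eq_sum_sum, sum_comm]

theorem dArcs_univ_right (S : Finset V) : dArcs A S univ = ∑ x ∈ S, outDeg A x := by
  simp only [dArcs_eq_sum_sum, outDeg, card_filter]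

theorem dArcs_univ_left (T : Finset V) : dArcs A univ T = ∑ x ∈ T, inDeg A x := by
  rw [← dArcs_swap, dArcs_univ_right]
  rfl

theorem dArcs_union_left {S T : Finset V} (h : Disjoint S T) (U : Finset V) :
    dArcs A (S ∪ T) U = dArcs A S U + dArcs A T U := by
  simp only [dArcs_eq_sum_sum, sum_union h]

theorem dArcs_union_right (S : Finset V) {T U : Finset V} (h : Disjoint T U) :
    dArcs A S (T ∪ U) = dArcs A S T + dArcs A S U := by
  simp only [← dArcs_swap A _ S, dArcs_union_left _ h]

theorem dArcs_mono {S S' T T' : Finset V} (hS : S ⊆ S') (hT : T ⊆ T') :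
    dArcs A S T ≤ dArcs A S' T' :=
  card_le_card (filter_subset_filter _ (product_subset_product hS hT))

theorem dArcs_eq_zero_of_subset {X S T : Finset V} (hX : dArcs A X X = 0) (hS : S ⊆ X)
    (hT : T ⊆ X) : dArcs A S T = 0 :=
  Nat.eq_zero_of_le_zero (hX ▸ dArcs_mono A hS hT)

theorem dArcs_compl_right {X S : Finset V} (hX : dArcs A X X = 0) (hS : S ⊆ X) :
    dArcs A S Xᶜ = ∑ x ∈ S, outDeg A x := by
  rw [← dArcs_univ_right, ← union_compl X, dArcs_union_right A S disjoint_compl_right,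
    dArcs_eq_zero_of_subset A hX hS subset_rfl, zero_add]

theorem dArcs_compl_left {X S : Finset V} (hX : dArcs A X X = 0) (hS : S ⊆ X) :
    dArcs A Xᶜ S = ∑ x ∈ S, inDeg A x := by
  rw [← dArcs_swap, dArcs_compl_right _ (by rwa [dArcs_swap]) hS]
  rfl

theorem dArcs_univ_eq_sum_deg_add {X : Finset V} (hX : dArcs A X X = 0) :
    dArcs A univ univ = ∑ x ∈ X, deg A x + dArcs A Xᶜ Xᶜ := by
  rw [dArcs_univ_right, ← sum_add_sum_compl X, ← dArcs_univ_right A Xᶜ, ← union_compl X,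
    dArcs_union_right A Xᶜ disjoint_compl_right, dArcs_compl_left A hX subset_rfl, ← add_assoc,
    ← sum_add_distrib]
  rfl

theorem sum_deg_s8 (X : Finset V) : ∑ x ∈ X, deg A x = dArcs A X univ + dArcs A univ X := by
  rw [dArcs_univ_right, dArcs_univ_left, ← sum_add_distrib]
  rfl

theorem mul_card_le_dArcs {d : ℕ} {S : Finset V} (hout : ∀ x ∈ S, d ≤ outDeg A x) :
    d * #S ≤ dArcs A univ univ := by
  calc d * #S = #S • d := by rw [smul_eq_mul, mul_comm]
    _ ≤ ∑ x ∈ S, outDeg A x := card_nsmul_le_sum S _ d hout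
    _ = dArcs A S univ := (dArcs_univ_right A S).symm
    _ ≤ dArcs A univ univ := dArcs_mono A (subset_univ S) subset_rfl

theorem mul_sVal_le_dArcs {d : ℕ} (hout : ∀ x, d ≤ outDeg A x) (x : V) :
    d * sVal A x ≤ dArcs A univ univ := by
  have hdeg : sVal A x ≤ outDeg A x ∨ sVal A x ≤ inDeg A x := by unfold sVal; omega
  have hle (S : Finset V) (hS : sVal A x ≤ #S) : d * sVal A x ≤ dArcs A univ univ :=
    (mul_le_mul_of_nonneg_left hS (by positivity)).trans
      (mod_cast mul_card_le_dArcs A fun y (_ : y ∈ S) ↦ hout y)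
  exact hdeg.elim (hle _) (hle _)

theorem sum_sq_deg_le {Y : Finset V} {c : ℝ} (hc : 0 ≤ c) (hdeg : ∀ y ∈ Y, (deg A y : ℝ) ≤ c) :
    ∑ y ∈ Y, (deg A y : ℝ) ^ 2 ≤ c * (2 * dArcs A univ univ) := by
  have hsum : ∑ y ∈ Y, deg A y ≤ 2 * dArcs A univ univ := by
    rw [sum_deg_s8, two_mul]
    exact add_le_add (dArcs_mono A (subset_univ Y) subset_rfl)
      (dArcs_mono A subset_rfl (subset_univ Y))
  calc ∑ y ∈ Y, (deg A y : ℝ) ^ 2 ≤ ∑ y ∈ Y, c * (deg A y : ℝ) :=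
        sum_le_sum fun y hy ↦ by
          rw [sq]; exact mul_le_mul_of_nonneg_right (hdeg y hy) (by positivity)
    _ = c * (∑ y ∈ Y, deg A y : ℕ) := by rw [← mul_sum]; push_cast; rfl
    _ ≤ c * (2 * dArcs A univ univ) := by gcongr; exact_mod_cast hsum

theorem gap_eq_signedSum {X X₁ : Finset V} (hX : dArcs A X X = 0) (hX₁ : X₁ ⊆ X) :
    gap A X₁ (X \ X₁) Xᶜ = signedSum (fun x ↦ (outDeg A x : ℤ) - inDeg A x) X X₁ := by
  rw [gap, signedSum, dArcs_compl_right A hX hX₁, dArcs_compl_right A hX sdiff_subset,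
    dArcs_compl_left A hX hX₁, dArcs_compl_left A hX sdiff_subset, sum_sub_distrib,
    sum_sub_distrib]
  push_cast
  ring

theorem exists_gap_eq_signedSum_sVal {X P : Finset V} (hX : dArcs A X X = 0) (hP : P ⊆ X) :
    ∃ X₁ ⊆ X, gap A X₁ (X \ X₁) Xᶜ = signedSum (sVal A) X P := by
  obtain ⟨X₁, hX₁, h⟩ :=
    exists_signedSum_eq_signedSum_abs (fun x ↦ (outDeg A x : ℤ) - inDeg A x) hP
  exact ⟨X₁, hX₁, by rw [gap_eq_signedSum A hX hX₁, h, funext (sVal_eq_abs A)]⟩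

theorem gap_swap (X₁ X₂ Y : Finset V) :
    gap (fun x y ↦ A y x) X₁ X₂ Y = -gap A X₁ X₂ Y := by
  simp only [gap, dArcs_swap]
  ring

theorem abs_dArcs_compl_insert_sub_le (y : V) (P : Finset V) :
    |(dArcs A (insert y P) (insert y P)ᶜ : ℝ) - dArcs A P Pᶜ| ≤ deg A y := by
  by_cases hy : y ∈ P
  · simp [insert_eq_of_mem hy]
  have hcompl : Pᶜ = {y} ∪ (insert y P)ᶜ := by
    ext x; by_cases hx : x = y <;> simp [hx, hy]
  have hin : dArcs A P {y} ≤ inDeg A y := by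
    simpa [dArcs_univ_left] using dArcs_mono A (subset_univ P) (subset_refl {y})
  have hout : dArcs A {y} (insert y P)ᶜ ≤ outDeg A y := by
    simpa [dArcs_univ_right] using dArcs_mono A (subset_refl {y}) (subset_univ (insert y P)ᶜ)
  have hP : dArcs A P Pᶜ = dArcs A P {y} + dArcs A P (insert y P)ᶜ := by
    rw [hcompl, dArcs_union_right A P (by simp)]
  have hyP : dArcs A (insert y P) (insert y P)ᶜ =
      dArcs A {y} (insert y P)ᶜ + dArcs A P (insert y P)ᶜ := by
    conv_lhs => rw [insert_eq, dArcs_union_left A (disjoint_singleton_left.mpr hy), ← insert_eq]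
  have hinℝ : (dArcs A P {y} : ℝ) ≤ inDeg A y := mod_cast hin
  have houtℝ : (dArcs A {y} (insert y P)ᶜ : ℝ) ≤ outDeg A y := mod_cast hout
  rw [hP, hyP, deg, abs_le]
  push_cast
  constructor <;> linarith [(dArcs A P {y}).cast_nonneg (α := ℝ),
    (dArcs A {y} (insert y P)ᶜ).cast_nonneg (α := ℝ)]

section RandomCut

open scoped BigOperators

theorem expect_dArcs_left (Y T : Finset V) :
    𝔼 S ∈ Y.powerset, (dArcs A S T : ℝ) = dArcs A Y T / 2 := by
  simp only [dArcs_eq_sum_sum, Nat.cast_sum]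
  exact expect_powerset_sum _ _

theorem expect_dArcs_sdiff_right (Y T : Finset V) :
    𝔼 S ∈ Y.powerset, (dArcs A T (Y \ S) : ℝ) = dArcs A T Y / 2 := by
  simp only [← dArcs_swap A _ T, dArcs_eq_sum_sum, Nat.cast_sum]
  exact expect_powerset_sum_sdiff _ _

theorem expect_dArcs_sdiff {Y : Finset V} (hirr : ∀ v ∈ Y, ¬ A v v) :
    𝔼 S ∈ Y.powerset, (dArcs A S (Y \ S) : ℝ) = dArcs A Y Y / 4 := by
  simp only [dArcs_eq_sum_sum, Nat.cast_sum]
  exact expect_powerset_sum_sum_sdiff fun x hx ↦ by simp [hirr x hx]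

theorem expect_dArcs_union_compl (hirr : ∀ v, ¬ A v v) {X X₁ : Finset V}
    (hX : dArcs A X X = 0) (hX₁ : X₁ ⊆ X) :
    𝔼 S ∈ Xᶜ.powerset, (dArcs A (X₁ ∪ S) (X₁ ∪ S)ᶜ : ℝ) =
      (dArcs A univ univ + gap A X₁ (X \ X₁) Xᶜ) / 4 := by
  have hcut : ∀ S ∈ Xᶜ.powerset, (dArcs A (X₁ ∪ S) (X₁ ∪ S)ᶜ : ℝ) =
      dArcs A X₁ (Xᶜ \ S) + dArcs A S (X \ X₁) + dArcs A S (Xᶜ \ S) := by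
    intro S hS
    rw [mem_powerset] at hS
    have hcompl : (X₁ ∪ S)ᶜ = (X \ X₁) ∪ (Xᶜ \ S) := by
      ext x
      have h₁ := @hX₁ x
      have h₂ := @hS x
      simp only [mem_compl, mem_union, mem_sdiff] at *
      tauto
    have hdisj : Disjoint (X \ X₁) (Xᶜ \ S) := disjoint_compl_right.mono sdiff_subset sdiff_subset
    rw [hcompl, dArcs_union_left A (disjoint_compl_right.mono hX₁ hS),
      dArcs_union_right A _ hdisj, dArcs_union_right A _ hdisj,
      dArcs_eq_zero_of_subset A hX hX₁ sdiff_subset]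
    push_cast
    ring
  have htotal : dArcs A univ univ = dArcs A X₁ Xᶜ + dArcs A (X \ X₁) Xᶜ + dArcs A Xᶜ X₁ +
      dArcs A Xᶜ (X \ X₁) + dArcs A Xᶜ Xᶜ := by
    rw [dArcs_univ_eq_sum_deg_add A hX, ← sum_sdiff hX₁, dArcs_compl_right A hX hX₁,
      dArcs_compl_right A hX sdiff_subset, dArcs_compl_left A hX hX₁,
      dArcs_compl_left A hX sdiff_subset]
    simp only [deg, sum_add_distrib]
    ring
  rw [expect_congr rfl hcut, expect_add_distrib, expect_add_distrib, expect_dArcs_sdiff_right,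
    expect_dArcs_left, expect_dArcs_sdiff A fun v _ ↦ hirr v, htotal, gap]
  push_cast
  ring

theorem exists_le_min_dArcs (hirr : ∀ v, ¬ A v v) {X X₁ : Finset V} (hX : dArcs A X X = 0)
    (hX₁ : X₁ ⊆ X) {ε : ℝ} (hε : 0 ≤ ε)
    (hdeg : ∀ y ∈ Xᶜ, (deg A y : ℝ) ≤ ε ^ 2 * dArcs A univ univ) :
    ∃ P : Finset V,
      (dArcs A univ univ - |(gap A X₁ (X \ X₁) Xᶜ : ℝ)|) / 4 - ε * dArcs A univ univ ≤
        min (dArcs A P Pᶜ : ℝ) (dArcs A Pᶜ P) := by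
  have hout := expect_dArcs_union_compl A hirr hX hX₁
  have hin := expect_dArcs_union_compl (fun x y ↦ A y x) hirr (by rwa [dArcs_swap]) hX₁
  simp only [dArcs_swap, gap_swap] at hin
  obtain ⟨S, -, hSout, hSin⟩ := exists_subset_abs_sub_expect_le (Y := Xᶜ)
    (c := fun y ↦ (deg A y : ℝ)) (δ := ε * dArcs A univ univ)
    (f₁ := fun S ↦ (dArcs A (X₁ ∪ S) (X₁ ∪ S)ᶜ : ℝ))
    (f₂ := fun S ↦ (dArcs A (X₁ ∪ S)ᶜ (X₁ ∪ S) : ℝ)) (by positivity)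
    ((sum_sq_deg_le A (by positivity) hdeg).trans_eq (by ring))
    (fun y _ S _ _ ↦ by
      simpa only [union_insert] using abs_dArcs_compl_insert_sub_le A y (X₁ ∪ S))
    (fun y _ S _ _ ↦ by
      simpa only [union_insert, dArcs_swap, deg_swap] using
        abs_dArcs_compl_insert_sub_le (fun x y ↦ A y x) y (X₁ ∪ S))
  rw [hout, abs_le] at hSout
  rw [hin, abs_le] at hSin
  push_cast at hSin
  refine ⟨X₁ ∪ S, le_min ?_ ?_⟩
  · linarith [neg_abs_le (gap A X₁ (X \ X₁) Xᶜ : ℝ)]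
  · linarith [le_abs_self (gap A X₁ (X \ X₁) Xᶜ : ℝ)]

end RandomCut

end Digraph

theorem stmt8_general {V : Type} [Fintype V] [DecidableEq V] (A : V → V → Prop) [DecidableRel A]
    (hirr : ∀ v, ¬ A v v)
    (m : ℕ) (hm : m = dArcs A univ univ)
    (d : ℝ) (hd : 1 / 2 < d)
    (X Y : Finset V) (hXY : X ∪ Y = univ) (hdXY : Disjoint X Y)
    (heX : dArcs A X X = 0)
    (hs : ∀ x ∈ X, d * sVal A x ≤ m)
    (θ : ℤ) (hθ : IsLeast {t : ℤ | ∃ X₁ ⊆ X, t = |gap A X₁ (X \ X₁) Y|} θ)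
    (X' : Finset V) (hX' : X' = {x ∈ X | θ ≤ sVal A x})
    (g : ℤ) (hg : g = ∑ x ∈ X \ X', sVal A x)
    (b : ℝ) (hb : b = (∑ x ∈ X, ((deg A x : ℝ) - sVal A x)) / 2)
    (ε : ℝ) (hε : 0 ≤ ε) (hdeg : ∀ y ∈ Y, (deg A y : ℝ) ≤ ε ^ 2 * m) :
    (∃ V₁ V₂ : Finset V, V₁ ∪ V₂ = univ ∧ Disjoint V₁ V₂ ∧
        ((d - 1) / (2 * (2 * d - 1)) - ε) * m ≤
          min (dArcs A V₁ V₂ : ℝ) (dArcs A V₂ V₁ : ℝ)) ∨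
      ∃ k : ℕ, #X' = 2 * k + 1 ∧
        ∀ v : ℕ → V,
          X' = (Icc 1 (2 * k + 1)).image v →
          Set.InjOn v ↑(Icc 1 (2 * k + 1)) →
          (∀ i ∈ Icc 1 (2 * k + 1), ∀ j ∈ Icc 1 (2 * k + 1), i ≤ j →
            sVal A (v j) ≤ sVal A (v i)) →
          d * ((∑ j ∈ Icc 1 k, (sVal A (v j) : ℝ)) + (g : ℝ)) -
            (d - 1) * (∑ j ∈ Icc (k + 1) (2 * k + 1), (sVal A (v j) : ℝ)) +
            b + (dArcs A Y Y : ℝ) / 2 < 0 := by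
  obtain rfl : Xᶜ = Y := (IsCompl.of_eq (disjoint_iff.mp hdXY) hXY).compl_eq
  subst hX' hb
  obtain ⟨⟨X₁, hX₁, hθX₁⟩, hmin⟩ := hθ
  rcases le_or_gt ((2 * d - 1) * θ) m with hsmall | hlarge
  · left
    subst hm
    obtain ⟨P, hP⟩ := exists_le_min_dArcs A hirr heX hX₁ hε hdeg
    refine ⟨P, Pᶜ, union_compl P, disjoint_compl_right, le_trans ?_ hP⟩
    rw [← Int.cast_abs, ← hθX₁, sub_mul]
    gcongr
    rw [div_mul_eq_mul_div, div_le_div_iff₀ (by linarith) (by norm_num)]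
    linarith
  · right
    have hsigned : ∀ P ⊆ X, θ ≤ |signedSum (sVal A) X P| := fun P hP ↦ by
      obtain ⟨X₂, hX₂, hgap⟩ := exists_gap_eq_signedSum_sVal A heX hP
      exact hmin ⟨X₂, hX₂, by rw [hgap]⟩
    have hθ : 0 < (θ : ℝ) :=
      pos_of_mul_pos_right ((Nat.cast_nonneg m).trans_lt hlarge) (by linarith)
    have hs₂ : ∀ x ∈ X, sVal A x < 2 * θ := fun x hx ↦ by
      have hdx : (d : ℝ) * sVal A x < d * (2 * θ) := by linarith [hs x hx]
      exact_mod_cast lt_of_mul_lt_mul_left hdx (by linarith)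
    obtain ⟨k, hk⟩ := odd_card_filter_of_forall_le_abs_signedSum (mod_cast hθ)
      (fun x _ ↦ sVal_nonneg A x) hs₂ hsigned
    refine ⟨k, hk, fun v hv hinj hanti ↦ ?_⟩
    have hgap := add_sum_sdiff_filter_le_sum_Icc_sub_sum_Icc (fun x _ ↦ sVal_nonneg A x) hs₂
      hsigned hv hinj fun i hi j hj ↦ hanti i (mem_Icc.mpr hi) j (mem_Icc.mpr hj)
    have hsum := sum_eq_sum_sdiff_add_sum_Icc_add_sum_Icc (sVal A) (filter_subset _ X)
      (show k ≤ 2 * k + 1 by omega) hv hinj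
    have hm' : (m : ℝ) = ∑ x ∈ X, (deg A x : ℝ) + dArcs A Xᶜ Xᶜ := by
      exact_mod_cast hm.trans (dArcs_univ_eq_sum_deg_add A heX)
    rw [← hg] at hgap hsum
    rify at hgap hsum
    have hmul := mul_le_mul_of_nonneg_left hgap (show 0 ≤ 2 * d - 1 by linarith)
    rw [sum_sub_distrib, hsum]
    linarith

/-- Lemma 3.2(1). -/
theorem stmt8 {V : Type} [Fintype V] [DecidableEq V] (A : V → V → Prop) [DecidableRel A]
    (hirr : ∀ v, ¬ A v v)
    (m : ℕ) (hm : m = dArcs A Finset.univ Finset.univ)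
    (d : ℕ) (hd : 4 ≤ d) (hout : ∀ x, d ≤ outDeg A x)
    (X Y : Finset V) (hXY : X ∪ Y = Finset.univ) (hdXY : Disjoint X Y)
    (heX : dArcs A X X = 0)
    (θ : ℤ) (hθ : IsLeast {t : ℤ | ∃ X₁ ⊆ X, t = |gap A X₁ (X \ X₁) Y|} θ)
    (X' : Finset V) (hX' : X' = X.filter fun x => θ ≤ sVal A x)
    (g : ℤ) (hg : g = ∑ x ∈ X \ X', sVal A x)
    (b : ℝ) (hb : b = (∑ x ∈ X, ((deg A x : ℝ) - (sVal A x : ℝ))) / 2)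
    (ε : ℝ) (hε : 0 < ε) (hdeg : ∀ y ∈ Y, (deg A y : ℝ) ≤ ε ^ 2 * m / 4)
    :
    (∃ V₁ V₂ : Finset V, V₁ ∪ V₂ = Finset.univ ∧ Disjoint V₁ V₂ ∧
        (((d : ℝ) - 1) / (2 * (2 * (d : ℝ) - 1)) - ε) * m ≤
          min (dArcs A V₁ V₂ : ℝ) (dArcs A V₂ V₁ : ℝ)) ∨
      ∃ k : ℕ, X'.card = 2 * k + 1 ∧
        ∀ v : ℕ → V,
          X' = (Finset.Icc 1 (2 * k + 1)).image v →
          Set.InjOn v ↑(Finset.Icc 1 (2 * k + 1)) →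
          (∀ i ∈ Finset.Icc 1 (2 * k + 1), ∀ j ∈ Finset.Icc 1 (2 * k + 1), i ≤ j →
            sVal A (v j) ≤ sVal A (v i)) →
          (d : ℝ) * ((∑ j ∈ Finset.Icc 1 k, (sVal A (v j) : ℝ)) + (g : ℝ)) -
            ((d : ℝ) - 1) * (∑ j ∈ Finset.Icc (k + 1) (2 * k + 1), (sVal A (v j) : ℝ)) +
            b + (dArcs A Y Y : ℝ) / 2 < 0 := by
  have hd' : (4 : ℝ) ≤ d := mod_cast hd
  exact stmt8_general A hirr m hm d (by linarith) X Y hXY hdXY heX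
    (fun x _ ↦ by rw [hm]; exact_mod_cast mul_sVal_le_dArcs A hout x) θ hθ X' hX' g hg b hb ε hε.le
    fun y hy ↦ (hdeg y hy).trans (div_le_self (by positivity) (by norm_num))
end
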